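/- Reproducing kernel identity for the QP-WPT: let f ∈ L¹(ℝ) ∩ L²(ℝ), let ψ ∈ L¹(ℝ) ∩ L²(ℝ) with ‖ψ‖_{L²(ℝ)} = 1, and fix α > 0. Then for every (ξ₀, β₀) ∈ ℝ², W^μ_f(ξ₀, β₀, α) = ∫_ℝ ∫_ℝ W^μ_f(ξ, β, α) · K_{ψ,μ}(ξ, β; ξ₀, β₀) dξ dβ, where K_{ψ,μ}(ξ, β; ξ₀, β₀) = ∫_ℝ ψ^μ_{ξ,β,α}(t) · conj(ψ^μ_{ξ₀,β₀,α}(t)) dt and ψ^μ_{ξ,β,α}(t) = conj(√(b/(2πi))) · e^{−i(2at² + btξ + cξ² + 2dt + eξ − aβ² − dβ)} · α^{−1/2} ψ((t − β)/α). -/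

import Mathlib

open MeasureTheory Complex

/-- The constant √(b/(2πi)) = √(b/(2π))·e^{−iπ/4}. -/
noncomputable def qpConst (b : ℝ) : ℂ :=
  (Real.sqrt (b / (2 * Real.pi)) : ℂ) * Complex.exp (-((Real.pi / 4 : ℝ) : ℂ) * Complex.I)

/-- The dilation ψ_α(t) = α^{−1/2} ψ(t/α). -/
noncomputable def dil (ψ : ℝ → ℂ) (α : ℝ) (t : ℝ) : ℂ :=
  ((α ^ (-(1 / 2 : ℝ)) : ℝ) : ℂ) * ψ (t / α)

/-- The quadratic-phase Fourier transform. -/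
noncomputable def QPFT (a b c d e : ℝ) (f : ℝ → ℂ) (ξ : ℝ) : ℂ :=
  qpConst b * ∫ t : ℝ, f t *
    Complex.exp (Complex.I * ((a * t ^ 2 + b * t * ξ + c * ξ ^ 2 + d * t + e * ξ : ℝ) : ℂ))

/-- The quadratic-phase wave packet transform of `f` with respect to the wavelet `ψ`. -/
noncomputable def QPWPT (a b c d e : ℝ) (ψ f : ℝ → ℂ) (ξ β α : ℝ) : ℂ :=
  qpConst b * ∫ t : ℝ,
    Complex.exp (Complex.I * ((2 * a * t ^ 2 + b * t * ξ + c * ξ ^ 2 + 2 * d * t + e * ξ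
      - a * β ^ 2 - d * β : ℝ) : ℂ)) * f t * (starRingEnd ℂ) (dil ψ α (t - β))

/-- The analyzing packet ψ^μ_{ξ,β,α}. -/
noncomputable def qpwPacket (a b c d e : ℝ) (ψ : ℝ → ℂ) (ξ β α : ℝ) (t : ℝ) : ℂ :=
  (starRingEnd ℂ) (qpConst b) *
    Complex.exp (-Complex.I * ((2 * a * t ^ 2 + b * t * ξ + c * ξ ^ 2 + 2 * d * t + e * ξ
      - a * β ^ 2 - d * β : ℝ) : ℂ)) * dil ψ α (t - β)

/-!
The transform `W^μ_f(ξ, β, α)` is `√(b/(2πi))` times a unimodular factor that depends only on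
`(ξ, β)`, times the short-time Fourier transform of the chirped signal `e^{i(2at² + 2dt)} f` with
window `ψ_α` at frequency `-bξ/(2π)`. The unimodular factors cancel in `W^μ_f · conj W^μ_h`, so
Moyal's identity for the short-time Fourier transform becomes the orthogonality relation
`∫∫ W^μ_f · conj W^μ_h dξ dβ = ⟨f, h⟩ ‖ψ‖²`. Now take `h` to be the packet `ψ^μ_{ξ₀,β₀,α}`: pairing
with packets computes the transform, so `⟨f, h⟩ = W^μ_f(ξ₀, β₀, α)` and `conj W^μ_h` is the kernel.
-/

section Plancherel

open FourierTransform SchwartzMap ComplexConjugate ComplexInnerProductSpace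

variable {V F : Type*} [NormedAddCommGroup V] [InnerProductSpace ℝ V] [FiniteDimensional ℝ V]
  [MeasurableSpace V] [BorelSpace V]
  [NormedAddCommGroup F] [InnerProductSpace ℂ F]

lemma inner_toLp_toLp {X : Type*} [MeasurableSpace X] {μ : Measure X} {f g : X → F}
    (hf : MemLp f 2 μ) (hg : MemLp g 2 μ) :
    ⟪hf.toLp f, hg.toLp g⟫ = ∫ x, ⟪f x, g x⟫ ∂μ := by
  rw [L2.inner_def]
  refine integral_congr_ae ?_
  filter_upwards [hf.coeFn_toLp, hg.coeFn_toLp] with x hfx hgx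
  rw [hfx, hgx]

lemma integral_mul_conj_self {X : Type*} [MeasurableSpace X] {μ : Measure X} {ψ : X → ℂ}
    (hψ : MemLp ψ 2 μ) : ∫ x, ψ x * conj (ψ x) ∂μ = ((eLpNorm ψ 2 μ).toReal : ℂ) ^ 2 := by
  rw [← Lp.norm_toLp ψ hψ]
  exact (inner_toLp_toLp hψ hψ).symm.trans (inner_self_eq_norm_sq_to_K _)

variable [CompleteSpace F]

lemma fourier_toLp_ae_eq {f : V → F} (hf₁ : Integrable f) (hf₂ : MemLp f 2) :
    (𝓕 (hf₂.toLp f) : Lp F 2 (volume : Measure V)) =ᵐ[volume] 𝓕 f := by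
  -- Both sides are locally integrable, and they are the same tempered distribution.
  have hcont : Continuous (𝓕 f) :=
    VectorFourier.fourierIntegral_continuous Real.continuous_fourierChar
      (L := innerₗ V) continuous_inner hf₁
  refine ae_eq_of_integral_contDiff_smul_eq ((Lp.memLp _).locallyIntegrable one_le_two)
    hcont.locallyIntegrable fun g g_smooth g_supp ↦ ?_
  let G : 𝓢(V, ℂ) := (g_supp.comp_left (g := ofRealCLM) rfl).toSchwartzMap (by fun_prop)
  have hG (w : F) (x : V) : g x • w = G x • w := (Complex.coe_smul (g x) w).symm
  simp only [hG]
  calc ∫ x, G x • (𝓕 (hf₂.toLp f) : Lp F 2 (volume : Measure V)) x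
      = ∫ x, 𝓕 G x • hf₂.toLp f x := by
        simpa only [TemperedDistribution.fourier_apply, Lp.toTemperedDistribution_apply] using
          (DFunLike.congr_fun (Lp.fourier_toTemperedDistribution_eq (hf₂.toLp f)) G).symm
    _ = ∫ x, 𝓕 (G : V → ℂ) x • f x := by
        refine integral_congr_ae ?_
        filter_upwards [hf₂.coeFn_toLp] with x hx
        rw [hx, SchwartzMap.fourier_coe]
    _ = ∫ x, G x • 𝓕 f x := by
        simpa using! VectorFourier.integral_fourierIntegral_smul_eq_flip (L := innerₗ V)
          (μ := volume) (ν := volume) Real.continuous_fourierChar continuous_inner G.integrable hf₁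

lemma integral_inner_fourier_fourier_of_memLp {f g : V → F} (hf₁ : Integrable f)
    (hf₂ : MemLp f 2) (hg₁ : Integrable g) (hg₂ : MemLp g 2) :
    ∫ ξ, ⟪𝓕 f ξ, 𝓕 g ξ⟫ = ∫ x, ⟪f x, g x⟫ := by
  rw [← inner_toLp_toLp hf₂ hg₂, ← Lp.inner_fourier_eq, L2.inner_def]
  refine integral_congr_ae ?_
  filter_upwards [fourier_toLp_ae_eq hf₁ hf₂, fourier_toLp_ae_eq hg₁ hg₂] with ξ hfξ hgξ
  rw [hfξ, hgξ]

end Plancherel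

section Translation

variable {G 𝕜 : Type*} [AddGroup G] [MeasurableSpace G] [MeasurableAdd₂ G] [MeasurableNeg G]
  {μ : Measure G} [SFinite μ] [μ.IsAddRightInvariant] [μ.IsNegInvariant] [RCLike 𝕜] {f g : G → 𝕜}

lemma ae_integrable_mul_comp_sub (hf : Integrable f μ) (hg : Integrable g μ) :
    ∀ᵐ x ∂μ, Integrable (fun t ↦ f t * g (t - x)) μ := by
  filter_upwards [hf.ae_convolution_exists (.mul 𝕜 𝕜) hg.comp_neg] with x hx
  simpa [ConvolutionExistsAt] using hx

lemma integral_integral_mul_comp_sub (hf : Integrable f μ) (hg : Integrable g μ) :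
    ∫ x, ∫ t, f t * g (t - x) ∂μ ∂μ = (∫ t, f t ∂μ) * ∫ t, g t ∂μ := by
  simpa [convolution, integral_neg_eq_self] using
    integral_convolution (.mul 𝕜 𝕜) hf hg.comp_neg

end Translation

section ShortTimeFourier

open FourierTransform ComplexConjugate

/-- The signal `f` seen through the window `g` translated by `x`, whose Fourier transform is the
short-time Fourier transform. The window enters conjugated. -/
def windowed {G : Type*} [Sub G] (g f : G → ℂ) (x t : G) : ℂ :=
  f t * conj (g (t - x))

variable {V : Type*} [NormedAddCommGroup V] [InnerProductSpace ℝ V] [FiniteDimensional ℝ V]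
  [MeasurableSpace V] [BorelSpace V]

/-- The short-time Fourier transform of `f` with window `g`, at position `x` and frequency `ω`,
with Mathlib's normalisation `e^{-2πi⟪t, ω⟫}` of the Fourier kernel. -/
noncomputable def shortTimeFourier (g f : V → ℂ) (x ω : V) : ℂ :=
  𝓕 (windowed g f x) ω

variable {g g₁ g₂ f f₁ f₂ : V → ℂ}

lemma integrable_windowed (hg : MemLp g 2) (hf : MemLp f 2) (x : V) :
    Integrable (windowed g f x) :=
  hf.integrable_mul (hg.comp_measurePreserving (measurePreserving_sub_right volume x)).star

lemma ae_memLp_windowed (hg : MemLp g 2) (hf : MemLp f 2) :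
    ∀ᵐ x : V, MemLp (windowed g f x) 2 := by
  have sq_integrable {u : V → ℂ} (hu : MemLp u 2) : Integrable fun t ↦ ‖u t‖ ^ 2 :=
    (memLp_two_iff_integrable_sq_norm hu.1).1 hu
  filter_upwards [ae_integrable_mul_comp_sub (sq_integrable hf) (sq_integrable hg)] with x hx
  rw [memLp_two_iff_integrable_sq_norm (integrable_windowed hg hf x).1]
  simpa [windowed, mul_pow] using hx

/-- Moyal's identity: Plancherel in `ω` for almost every `x`, then Fubini in `x`. -/
theorem integral_integral_shortTimeFourier_mul_conj (hg₁ : MemLp g₁ 2) (hg₂ : MemLp g₂ 2)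
    (hf₁ : MemLp f₁ 2) (hf₂ : MemLp f₂ 2) :
    ∫ x, ∫ ω, shortTimeFourier g₁ f₁ x ω * conj (shortTimeFourier g₂ f₂ x ω)
      = (∫ t, f₁ t * conj (f₂ t)) * ∫ t, g₂ t * conj (g₁ t) := by
  have plancherel : ∀ᵐ x : V,
      ∫ ω, shortTimeFourier g₁ f₁ x ω * conj (shortTimeFourier g₂ f₂ x ω)
        = ∫ t, f₁ t * conj (f₂ t) * (g₂ (t - x) * conj (g₁ (t - x))) := by
    filter_upwards [ae_memLp_windowed hg₁ hf₁, ae_memLp_windowed hg₂ hf₂] with x h₁ h₂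
    calc _ = ∫ t, windowed g₁ f₁ x t * conj (windowed g₂ f₂ x t) :=
          integral_inner_fourier_fourier_of_memLp (integrable_windowed hg₂ hf₂ x) h₂
            (integrable_windowed hg₁ hf₁ x) h₁
      _ = _ := by
          congr with t
          simp only [windowed, map_mul, conj_conj]
          ring
  rw [integral_congr_ae plancherel]
  exact integral_integral_mul_comp_sub (hf₁.integrable_mul hf₂.star) (hg₂.integrable_mul hg₁.star)

end ShortTimeFourier

section QuadraticPhase

open FourierTransform ComplexConjugate

lemma conj_exp_I_mul_ofReal (x : ℝ) : conj (exp (I * x)) = exp (-I * x) := by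
  rw [← exp_conj, map_mul, conj_I, conj_ofReal]

lemma exp_I_mul_ofReal_mul_conj (x : ℝ) : exp (I * x) * conj (exp (I * x)) = 1 := by
  rw [conj_exp_I_mul_ofReal, ← exp_add, neg_mul, add_neg_cancel, exp_zero]

lemma memLp_exp_I_mul {X : Type*} [TopologicalSpace X] [MeasurableSpace X] [OpensMeasurableSpace X]
    {μ : Measure X} {p : ENNReal} {f : X → ℂ} (hf : MemLp f p μ) {θ : X → ℝ} (hθ : Continuous θ) :
    MemLp (fun x ↦ exp (I * θ x) * f x) p μ := by
  refine hf.of_le ((Continuous.aestronglyMeasurable (by fun_prop)).mul hf.1) (.of_forall fun x ↦ ?_)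
  rw [norm_mul, mul_comm I, norm_exp_ofReal_mul_I, one_mul]

lemma qpConst_mul_conj {b : ℝ} (hb : 0 ≤ b) :
    qpConst b * conj (qpConst b) = (b / (2 * Real.pi) : ℝ) := by
  have hphase : -((Real.pi / 4 : ℝ) : ℂ) * I = ((-(Real.pi / 4) : ℝ) : ℂ) * I := by push_cast; rfl
  rw [mul_conj, normSq_eq_norm_sq, qpConst, hphase, norm_mul, norm_exp_ofReal_mul_I, mul_one,
    norm_real, Real.norm_eq_abs, sq_abs, Real.sq_sqrt (by positivity)]

lemma memLp_dil {ψ : ℝ → ℂ} {p : ENNReal} (hψ : MemLp ψ p) {α : ℝ} (hα : α ≠ 0) :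
    MemLp (dil ψ α) p := by
  have hmap : MemLp ψ p (Measure.map (· * α⁻¹) volume) := by
    rw [Real.map_volume_mul_right (inv_ne_zero hα)]
    exact hψ.smul_measure ENNReal.ofReal_ne_top
  exact (hmap.comp_of_map (by fun_prop)).const_mul _

lemma integral_dil_mul_conj_dil (φ ψ : ℝ → ℂ) {α : ℝ} (hα : 0 < α) :
    ∫ t, dil φ α t * conj (dil ψ α t) = ∫ t, φ t * conj (ψ t) := by
  have hnormalization : ((α ^ (-(1 / 2 : ℝ)) : ℝ) : ℂ) * (α ^ (-(1 / 2 : ℝ)) : ℝ) = (α⁻¹ : ℝ) := by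
    rw [← ofReal_mul, ← Real.rpow_add hα, ← Real.rpow_neg_one]
    norm_num
  calc ∫ t, dil φ α t * conj (dil ψ α t)
      = ∫ t, ((α⁻¹ : ℝ) : ℂ) * (φ (t / α) * conj (ψ (t / α))) := by
        congr with t
        rw [dil, dil, map_mul, conj_ofReal, mul_mul_mul_comm, hnormalization]
    _ = ∫ t, φ t * conj (ψ t) := by
        rw [integral_const_mul, Measure.integral_comp_div (fun t ↦ φ t * conj (ψ t)),
          abs_of_pos hα, real_smul, ← mul_assoc, ← ofReal_mul, inv_mul_cancel₀ hα.ne',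
          ofReal_one, one_mul]

/-- The signal `f` multiplied by the part `e^{i(2at² + 2dt)}` of the phase of the QP-WPT that
depends on time only: the transform is a short-time Fourier transform of this signal. -/
noncomputable def chirp (a d : ℝ) (f : ℝ → ℂ) (t : ℝ) : ℂ :=
  exp (I * (2 * a * t ^ 2 + 2 * d * t : ℝ)) * f t

lemma memLp_chirp (a d : ℝ) {f : ℝ → ℂ} {p : ENNReal} (hf : MemLp f p) : MemLp (chirp a d f) p :=
  memLp_exp_I_mul hf (by fun_prop)

lemma chirp_mul_conj_chirp (a d : ℝ) (f h : ℝ → ℂ) (t : ℝ) :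
    chirp a d f t * conj (chirp a d h t) = f t * conj (h t) := by
  rw [chirp, chirp, map_mul, mul_mul_mul_comm, exp_I_mul_ofReal_mul_conj, one_mul]

variable (a b c d e : ℝ)

lemma QPWPT_eq_shortTimeFourier (ψ f : ℝ → ℂ) (ξ β α : ℝ) :
    QPWPT a b c d e ψ f ξ β α
      = qpConst b * (exp (I * (c * ξ ^ 2 + e * ξ - a * β ^ 2 - d * β : ℝ)) *
          shortTimeFourier (dil ψ α) (chirp a d f) β (-(b / (2 * Real.pi)) * ξ)) := by
  rw [QPWPT, shortTimeFourier, Real.fourier_real_eq_integral_exp_smul]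
  congr 1
  rw [← integral_const_mul]
  congr with t
  have hfreq : -2 * Real.pi * t * (-(b / (2 * Real.pi)) * ξ) = b * t * ξ := by field_simp
  simp only [hfreq, windowed, chirp, smul_eq_mul, ← mul_assoc, ← exp_add]
  congr 3
  push_cast
  ring

lemma QPWPT_eq_integral_mul_conj_qpwPacket (ψ f : ℝ → ℂ) (ξ β α : ℝ) :
    QPWPT a b c d e ψ f ξ β α = ∫ t, f t * conj (qpwPacket a b c d e ψ ξ β α t) := by
  rw [QPWPT, ← integral_const_mul]
  congr with t
  simp only [qpwPacket, ← conj_exp_I_mul_ofReal, map_mul, conj_conj]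
  ring

lemma integral_qpwPacket_mul_conj (ψ h : ℝ → ℂ) (ξ β α : ℝ) :
    ∫ t, qpwPacket a b c d e ψ ξ β α t * conj (h t) = conj (QPWPT a b c d e ψ h ξ β α) := by
  rw [QPWPT_eq_integral_mul_conj_qpwPacket, ← integral_conj]
  simp only [map_mul, conj_conj, mul_comm]

lemma memLp_qpwPacket {ψ : ℝ → ℂ} {p : ENNReal} (hψ : MemLp ψ p) {α : ℝ} (hα : α ≠ 0)
    (ξ β : ℝ) : MemLp (qpwPacket a b c d e ψ ξ β α) p := by
  have hshift : MemLp (fun t ↦ dil ψ α (t - β)) p :=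
    (memLp_dil hψ hα).comp_measurePreserving (measurePreserving_sub_right volume β)
  have hmod := (memLp_exp_I_mul hshift (θ := fun t ↦ -(2 * a * t ^ 2 + b * t * ξ + c * ξ ^ 2 +
    2 * d * t + e * ξ - a * β ^ 2 - d * β)) (by fun_prop)).const_mul (conj (qpConst b))
  simpa only [ofReal_neg, mul_neg, ← neg_mul, ← mul_assoc] using! hmod

variable {b}

lemma QPWPT_mul_conj_QPWPT (hb : 0 ≤ b) (ψ φ f h : ℝ → ℂ) (ξ β α : ℝ) :
    QPWPT a b c d e ψ f ξ β α * conj (QPWPT a b c d e φ h ξ β α)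
      = (b / (2 * Real.pi) : ℝ) *
        (shortTimeFourier (dil ψ α) (chirp a d f) β (-(b / (2 * Real.pi)) * ξ) *
          conj (shortTimeFourier (dil φ α) (chirp a d h) β (-(b / (2 * Real.pi)) * ξ))) := by
  simp only [QPWPT_eq_shortTimeFourier, map_mul]
  rw [mul_mul_mul_comm, qpConst_mul_conj hb, mul_mul_mul_comm, exp_I_mul_ofReal_mul_conj, one_mul]

theorem integral_integral_QPWPT_mul_conj (hb : 0 < b) {ψ φ f h : ℝ → ℂ} (hψ : MemLp ψ 2)
    (hφ : MemLp φ 2) (hf : MemLp f 2) (hh : MemLp h 2) {α : ℝ} (hα : 0 < α) :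
    ∫ β, ∫ ξ, QPWPT a b c d e ψ f ξ β α * conj (QPWPT a b c d e φ h ξ β α)
      = (∫ t, f t * conj (h t)) * ∫ t, φ t * conj (ψ t) := by
  have rescale (β : ℝ) : ∫ ξ, QPWPT a b c d e ψ f ξ β α * conj (QPWPT a b c d e φ h ξ β α)
      = ∫ ω, shortTimeFourier (dil ψ α) (chirp a d f) β ω *
          conj (shortTimeFourier (dil φ α) (chirp a d h) β ω) := by
    have hpos : 0 < b / (2 * Real.pi) := by positivity
    simp only [QPWPT_mul_conj_QPWPT a c d e hb.le]
    rw [integral_const_mul, Measure.integral_comp_mul_left (fun ω ↦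
        shortTimeFourier (dil ψ α) (chirp a d f) β ω *
          conj (shortTimeFourier (dil φ α) (chirp a d h) β ω)),
      inv_neg, abs_neg, abs_of_pos (inv_pos.2 hpos), real_smul, ← mul_assoc, ← ofReal_mul,
      mul_inv_cancel₀ hpos.ne', ofReal_one, one_mul]
  simp only [rescale]
  rw [integral_integral_shortTimeFourier_mul_conj (memLp_dil hψ hα.ne') (memLp_dil hφ hα.ne')
    (memLp_chirp a d hf) (memLp_chirp a d hh), integral_dil_mul_conj_dil φ ψ hα]
  simp only [chirp_mul_conj_chirp]

theorem qpwpt_reproducing_kernel_general (hb : 0 < b) {f ψ : ℝ → ℂ} (hf : MemLp f 2)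
    (hψ : MemLp ψ 2) {α : ℝ} (hα : 0 < α) (ξ₀ β₀ : ℝ) :
    ((eLpNorm ψ 2 volume).toReal : ℂ) ^ 2 * QPWPT a b c d e ψ f ξ₀ β₀ α
      = ∫ β, ∫ ξ, QPWPT a b c d e ψ f ξ β α *
          ∫ t, qpwPacket a b c d e ψ ξ β α t * conj (qpwPacket a b c d e ψ ξ₀ β₀ α t) := by
  simp only [integral_qpwPacket_mul_conj a b c d e ψ (qpwPacket a b c d e ψ ξ₀ β₀ α)]
  rw [integral_integral_QPWPT_mul_conj a c d e hb hψ hψ hf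
      (memLp_qpwPacket a b c d e hψ hα.ne' ξ₀ β₀) hα,
    ← QPWPT_eq_integral_mul_conj_qpwPacket, integral_mul_conj_self hψ, mul_comm]

end QuadraticPhase

theorem qpwpt_reproducing_kernel (a b c d e : ℝ) (hb : 0 < b) (f ψ : ℝ → ℂ)
    (hf1 : Integrable f volume) (hf2 : MemLp f 2 volume)
    (hψ1 : Integrable ψ volume) (hψ2 : MemLp ψ 2 volume)
    (hψnorm : eLpNorm ψ 2 volume = 1) (α : ℝ) (hα : 0 < α) (ξ₀ β₀ : ℝ) :
    QPWPT a b c d e ψ f ξ₀ β₀ α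
      = ∫ β : ℝ, ∫ ξ : ℝ, QPWPT a b c d e ψ f ξ β α *
          ∫ t : ℝ, qpwPacket a b c d e ψ ξ β α t *
            (starRingEnd ℂ) (qpwPacket a b c d e ψ ξ₀ β₀ α t) := by
  simpa [hψnorm] using qpwpt_reproducing_kernel_general a c d e hb hf2 hψ2 hα ξ₀ β₀
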